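/- arXiv:1909.06624 — 4 statements merged into one kernel-verified Lean document; each statement's English description precedes it below -/
import Mathlib

section
/- Let U_i, Û_i ∈ ℝ^{p_i×r_i} (i = 1,2,3) be orthonormal matrices. Then ‖U_3⊗U_2⊗U_1 − Û_3⊗Û_2⊗Û_1‖_F ≤ √(r1·r2)·‖U_3 − Û_3‖_F + √(r1·r3)·‖U_2 − Û_2‖_F + √(r2·r3)·‖U_1 − Û_1‖_F. -/
open scoped BigOperators Kronecker
open Matrix

/-- Frobenius norm of a matrix: square root of the sum of squared entries. -/
noncomputable def frob {m n : Type*} [Fintype m] [Fintype n] (M : Matrix m n ℝ) : ℝ :=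
  Real.sqrt (∑ i, ∑ j, (M i j) ^ 2)

theorem frob_eq_norm {m n : Type*} [Fintype m] [Fintype n] (M : Matrix m n ℝ) :
    frob M = ‖(WithLp.toLp 2 (fun x : m × n => M x.1 x.2) : EuclideanSpace ℝ (m × n))‖ := by
  simp [frob, EuclideanSpace.norm_eq, Fintype.sum_prod_type]

theorem frob_add_le {m n : Type*} [Fintype m] [Fintype n] (M N : Matrix m n ℝ) :
    frob (M + N) ≤ frob M + frob N := by
  simp only [frob_eq_norm]
  exact norm_add_le (WithLp.toLp 2 (fun x : m × n => M x.1 x.2) : EuclideanSpace ℝ (m × n))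
    (WithLp.toLp 2 (fun x : m × n => N x.1 x.2))

theorem frob_kron {m n p q : Type*} [Fintype m] [Fintype n] [Fintype p] [Fintype q]
    (M : Matrix m n ℝ) (N : Matrix p q ℝ) : frob (M ⊗ₖ N) = frob M * frob N := by
  unfold frob
  rw [← Real.sqrt_mul (by positivity)]
  congr 1
  simp only [Fintype.sum_prod_type, kroneckerMap_apply, mul_pow]
  rw [Finset.sum_mul_sum]
  refine Finset.sum_congr rfl fun i _ => Finset.sum_congr rfl fun j _ => ?_
  rw [Finset.sum_mul_sum]

theorem frob_orth {p r : ℕ} (U : Matrix (Fin p) (Fin r) ℝ) (h : Uᵀ * U = 1) :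
    frob U = Real.sqrt r := by
  unfold frob
  congr 1
  rw [Finset.sum_comm]
  have h2 : ∀ j, ∑ i, U i j ^ 2 = 1 := by
    intro j
    have := congrFun (congrFun h j) j
    simpa [Matrix.mul_apply, sq] using this
  simp [h2]

/-- For orthonormal matrices `Uᵢ, Ûᵢ ∈ ℝ^{pᵢ×rᵢ}`,
`‖U3⊗U2⊗U1 − Û3⊗Û2⊗Û1‖_F ≤ √(r1·r2)·‖U3 − Û3‖_F + √(r1·r3)·‖U2 − Û2‖_F
  + √(r2·r3)·‖U1 − Û1‖_F`. -/
theorem kronecker_diff_bound {p1 p2 p3 r1 r2 r3 : ℕ}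
    (U1 V1 : Matrix (Fin p1) (Fin r1) ℝ) (U2 V2 : Matrix (Fin p2) (Fin r2) ℝ)
    (U3 V3 : Matrix (Fin p3) (Fin r3) ℝ)
    (hU1 : U1ᵀ * U1 = 1) (hU2 : U2ᵀ * U2 = 1) (hU3 : U3ᵀ * U3 = 1)
    (hV1 : V1ᵀ * V1 = 1) (hV2 : V2ᵀ * V2 = 1) (hV3 : V3ᵀ * V3 = 1) :
    frob (U3 ⊗ₖ U2 ⊗ₖ U1 - V3 ⊗ₖ V2 ⊗ₖ V1) ≤
      Real.sqrt ((r1 : ℝ) * r2) * frob (U3 - V3) +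
      Real.sqrt ((r1 : ℝ) * r3) * frob (U2 - V2) +
      Real.sqrt ((r2 : ℝ) * r3) * frob (U1 - V1) := by
  have key : U3 ⊗ₖ U2 ⊗ₖ U1 - V3 ⊗ₖ V2 ⊗ₖ V1 =
      (U3 - V3) ⊗ₖ U2 ⊗ₖ U1 + V3 ⊗ₖ (U2 - V2) ⊗ₖ U1 + V3 ⊗ₖ V2 ⊗ₖ (U1 - V1) := by
    ext ⟨⟨a, b⟩, c⟩ ⟨⟨d, e⟩, f⟩
    simp only [Matrix.sub_apply, Matrix.add_apply, kroneckerMap_apply]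
    ring
  rw [key]
  refine (frob_add_le _ _).trans ?_
  refine (add_le_add_left (frob_add_le _ _) _).trans (le_of_eq ?_)
  simp only [frob_kron, frob_orth _ hU1, frob_orth _ hU2, frob_orth _ hV2, frob_orth _ hV3]
  rw [Real.sqrt_mul (by positivity), Real.sqrt_mul (by positivity), Real.sqrt_mul (by positivity)]
  ring
end

section
/- Let J ∈ ℝ^{N×N} be symmetric positive definite, let R ∈ ℝ^{N×k}, M ∈ ℝ^{k×l}, and set H = RM. Suppose HᵀJH and RᵀJR are invertible. Then H(HᵀJH)⁻¹Hᵀ ≤ R(RᵀJR)⁻¹Rᵀ in the Loewner order. -/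
open Matrix

/-- For symmetric positive definite `J`, `H = RM`, with `HᵀJH` and `RᵀJR`
invertible, `H(HᵀJH)⁻¹Hᵀ ≤ R(RᵀJR)⁻¹Rᵀ` in the Loewner order. -/
theorem proj_le_proj {N k l : ℕ} (J : Matrix (Fin N) (Fin N) ℝ)
    (R : Matrix (Fin N) (Fin k) ℝ) (M : Matrix (Fin k) (Fin l) ℝ)
    (hJ : J.PosDef) (hJsymm : Jᵀ = J)
    (H : Matrix (Fin N) (Fin l) ℝ) (hH : H = R * M)
    (hHJH : IsUnit (Hᵀ * J * H)) (hRJR : IsUnit (Rᵀ * J * R)) :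
    (R * (Rᵀ * J * R)⁻¹ * Rᵀ - H * (Hᵀ * J * H)⁻¹ * Hᵀ).PosSemidef := by
  have hA : (Rᵀ * J * R)⁻¹ * (Rᵀ * J * R) = 1 :=
    Matrix.nonsing_inv_mul _ ((Matrix.isUnit_iff_isUnit_det _).1 hRJR)
  have hB : (Hᵀ * J * H)⁻¹ * (Hᵀ * J * H) = 1 :=
    Matrix.nonsing_inv_mul _ ((Matrix.isUnit_iff_isUnit_det _).1 hHJH)
  have hAs : ((Rᵀ * J * R)⁻¹)ᵀ = (Rᵀ * J * R)⁻¹ := by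
    rw [Matrix.transpose_nonsing_inv]
    simp [Matrix.transpose_mul, hJsymm, Matrix.mul_assoc]
  have hBs : ((Hᵀ * J * H)⁻¹)ᵀ = (Hᵀ * J * H)⁻¹ := by
    rw [Matrix.transpose_nonsing_inv]
    simp [Matrix.transpose_mul, hJsymm, Matrix.mul_assoc]
  generalize (Rᵀ * J * R)⁻¹ = A at *
  generalize (Hᵀ * J * H)⁻¹ = B at *
  have hPs : (R * A * Rᵀ)ᵀ = R * A * Rᵀ := by
    simp [Matrix.transpose_mul, hAs, Matrix.mul_assoc]
  have hQs : (H * B * Hᵀ)ᵀ = H * B * Hᵀ := by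
    simp [Matrix.transpose_mul, hBs, Matrix.mul_assoc]
  have hPR : R * A * Rᵀ * J * R = R := by
    calc R * A * Rᵀ * J * R = R * (A * (Rᵀ * J * R)) := by simp only [Matrix.mul_assoc]
      _ = R := by rw [hA, Matrix.mul_one]
  have hQH : H * B * Hᵀ * J * H = H := by
    calc H * B * Hᵀ * J * H = H * (B * (Hᵀ * J * H)) := by simp only [Matrix.mul_assoc]
      _ = H := by rw [hB, Matrix.mul_one]
  have hPH : R * A * Rᵀ * J * H = H := by
    rw [hH, ← Matrix.mul_assoc, hPR]
  have hPP : R * A * Rᵀ * J * (R * A * Rᵀ) = R * A * Rᵀ := by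
    rw [← Matrix.mul_assoc, ← Matrix.mul_assoc, hPR]
  have hQQ : H * B * Hᵀ * J * (H * B * Hᵀ) = H * B * Hᵀ := by
    rw [← Matrix.mul_assoc, ← Matrix.mul_assoc, hQH]
  have hPQ : R * A * Rᵀ * J * (H * B * Hᵀ) = H * B * Hᵀ := by
    rw [← Matrix.mul_assoc, ← Matrix.mul_assoc, hPH]
  generalize R * A * Rᵀ = P at *
  generalize H * B * Hᵀ = Q at *
  have hQP : Q * J * P = Q := by
    have h := congrArg Matrix.transpose hPQ
    rwa [Matrix.transpose_mul, Matrix.transpose_mul, hPs, hQs, hJsymm, ← Matrix.mul_assoc] at h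
  have key := hJ.posSemidef.conjTranspose_mul_mul_same (P - Q)
  rw [Matrix.conjTranspose_eq_transpose_of_trivial, Matrix.transpose_sub, hPs, hQs,
    Matrix.sub_mul, Matrix.sub_mul, Matrix.mul_sub, Matrix.mul_sub, hPP, hPQ, hQP, hQQ,
    sub_self, sub_zero] at key
  exact key
end

section
/- Let B ∈ ℝ^{T×N} be a real matrix of rank r ≥ 1, where T ≥ 1. Then there exist F ∈ ℝ^{T×r} and Λ ∈ ℝ^{N×r} such that FᵀF = T·I_r, ΛᵀΛ is a diagonal matrix with strictly positive diagonal entries, B = FΛᵀ, and the column space of Λ equals the column space of Bᵀ. -/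
open Matrix

/-- **Normalized factor representation.** Any real `T×N` matrix `B` of rank
`r ≥ 1` (with `T ≥ 1`) can be written `B = F·Λᵀ` where `FᵀF = T·I_r`, `ΛᵀΛ` is
diagonal with strictly positive diagonal entries, and the column space of `Λ`
(the span of the columns of `Λ`) equals the column space of `Bᵀ` (the span of
the rows of `B`). -/
theorem exists_factor_representation {T N r : ℕ} (hT : 1 ≤ T) (hr : 1 ≤ r)
    (B : Matrix (Fin T) (Fin N) ℝ) (hrank : B.rank = r) :
    ∃ (F : Matrix (Fin T) (Fin r) ℝ) (Λ : Matrix (Fin N) (Fin r) ℝ),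
      Fᵀ * F = (T : ℝ) • (1 : Matrix (Fin r) (Fin r) ℝ) ∧
      (∃ d : Fin r → ℝ, (∀ i, 0 < d i) ∧ Λᵀ * Λ = Matrix.diagonal d) ∧
      B = F * Λᵀ ∧
      Submodule.span ℝ (Set.range fun j : Fin r => fun i : Fin N => Λ i j) =
        Submodule.span ℝ (Set.range fun t : Fin T => fun i : Fin N => B t i) := by
  classical
  have hTpos : (0 : ℝ) < T := by exact_mod_cast hT
  have hA : (B * Bᵀ).IsHermitian := by
    simpa [conjTranspose_eq_transpose_of_trivial] using isHermitian_mul_conjTranspose_self B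
  have hPSD : (B * Bᵀ).PosSemidef := by
    simpa [conjTranspose_eq_transpose_of_trivial] using posSemidef_self_mul_conjTranspose B
  obtain ⟨U, l, hUU, hUU', hl0, hdiag, hcard⟩ : ∃ (U : Matrix (Fin T) (Fin T) ℝ) (l : Fin T → ℝ),
      Uᵀ * U = 1 ∧ U * Uᵀ = 1 ∧ (∀ i, 0 ≤ l i) ∧ Uᵀ * (B * Bᵀ) * U = diagonal l ∧
      Fintype.card {i // l i ≠ 0} = r := by
    have h1 : (hA.eigenvectorUnitary : Matrix (Fin T) (Fin T) ℝ)ᵀ * hA.eigenvectorUnitary = 1 := by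
      have := Unitary.coe_star_mul_self hA.eigenvectorUnitary
      simpa [star_eq_conjTranspose, conjTranspose_eq_transpose_of_trivial] using this
    refine ⟨hA.eigenvectorUnitary, hA.eigenvalues, h1, mul_eq_one_comm.mp h1,
      hPSD.eigenvalues_nonneg, ?_, ?_⟩
    · ext i j
      have hv : ((B * Bᵀ) * (hA.eigenvectorUnitary : Matrix (Fin T) (Fin T) ℝ)) =
          (hA.eigenvectorUnitary : Matrix (Fin T) (Fin T) ℝ) * diagonal hA.eigenvalues := by
        ext a b
        have := congrFun (hA.mulVec_eigenvectorBasis b) a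
        rw [mul_diagonal, mul_comm]
        simpa [mulVec, dotProduct, Matrix.mul_apply (M := B * Bᵀ)] using this
      rw [Matrix.mul_assoc, hv, ← Matrix.mul_assoc, h1, Matrix.one_mul]
    · rw [← hA.rank_eq_card_non_zero_eigs, rank_self_mul_transpose, hrank]
  let e : Fin r ≃ {i // l i ≠ 0} := (Fintype.equivFinOfCardEq hcard).symm
  have hrow : ∀ i, l i = 0 → ∀ n, (Uᵀ * B) i n = 0 := by
    intro i hi n
    have h : ((Uᵀ * B) * (Uᵀ * B)ᵀ) i i = 0 := by
      rw [transpose_mul, transpose_transpose, Matrix.mul_assoc, ← Matrix.mul_assoc B,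
        ← Matrix.mul_assoc, hdiag, diagonal_apply_eq, hi]
    rw [Matrix.mul_apply] at h
    have := (Finset.sum_eq_zero_iff_of_nonneg (fun k _ => by
      rw [transpose_apply]; exact mul_self_nonneg _)).mp h n (Finset.mem_univ _)
    exact mul_self_eq_zero.mp this
  let V : Matrix (Fin T) (Fin r) ℝ := U.submatrix id (fun j => (e j : Fin T))
  have hinj : Function.Injective (fun j => (e j : Fin T)) :=
    Subtype.val_injective.comp e.injective
  have hVV : Vᵀ * V = 1 := by
    have : Vᵀ * V = (Uᵀ * U).submatrix (fun j => (e j : Fin T)) (fun j => (e j : Fin T)) := rfl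
    rw [this, hUU, submatrix_one _ hinj]
  have hVAV : Vᵀ * (B * Bᵀ) * V = diagonal (fun j => l (e j)) := by
    have : Vᵀ * (B * Bᵀ) * V = (Uᵀ * (B * Bᵀ) * U).submatrix
      (fun j => (e j : Fin T)) (fun j => (e j : Fin T)) := rfl
    rw [this, hdiag, submatrix_diagonal _ _ hinj]; rfl
  have hVB : V * (Vᵀ * B) = B := by
    have h2 : B = U * (Uᵀ * B) := by rw [← Matrix.mul_assoc, hUU', Matrix.one_mul]
    conv_rhs => rw [h2]
    ext t n
    rw [Matrix.mul_apply, Matrix.mul_apply]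
    change ∑ j, U t (e j) * (Uᵀ * B) (e j) n = _
    refine Finset.sum_of_injOn (fun j => (e j : Fin T)) hinj.injOn (by simp) ?_ (fun _ _ => rfl)
    intro i _ hi
    have hli : l i = 0 := by
      by_contra hne
      exact hi ⟨e.symm ⟨i, hne⟩, by simp, by simp⟩
    rw [hrow i hli n, mul_zero]
  have hs : (√(T:ℝ)) * √(T:ℝ) = T := Real.mul_self_sqrt hTpos.le
  have hs0 : √(T:ℝ) ≠ 0 := (Real.sqrt_pos.mpr hTpos).ne'
  have hB : B = (√(T:ℝ) • V) * ((√(T:ℝ))⁻¹ • (Bᵀ * V))ᵀ := by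
    rw [transpose_smul, Matrix.smul_mul, Matrix.mul_smul, smul_smul, mul_inv_cancel₀ hs0, one_smul,
      transpose_mul, transpose_transpose, hVB]
  refine ⟨√(T:ℝ) • V, (√(T:ℝ))⁻¹ • (Bᵀ * V), ?_, ⟨fun j => (T:ℝ)⁻¹ * l (e j), ?_, ?_⟩, hB, ?_⟩
  · rw [transpose_smul, Matrix.smul_mul, Matrix.mul_smul, smul_smul, hs, hVV]
  · exact fun j => mul_pos (inv_pos.mpr hTpos) (lt_of_le_of_ne (hl0 _) (e j).2.symm)
  · rw [transpose_smul, Matrix.smul_mul, Matrix.mul_smul, smul_smul, ← mul_inv, hs,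
      transpose_mul, transpose_transpose, Matrix.mul_assoc, ← Matrix.mul_assoc B,
      ← Matrix.mul_assoc, hVAV]
    ext i j
    by_cases h : i = j <;> simp [h, diagonal_apply]
  · apply le_antisymm <;> rw [Submodule.span_le]
    · rintro _ ⟨j, rfl⟩
      have : (fun i => ((√(T:ℝ))⁻¹ • (Bᵀ * V)) i j) =
          ∑ t, ((√(T:ℝ))⁻¹ * V t j) • (fun i => B t i) := by
        ext i
        simp only [Matrix.smul_apply, Matrix.mul_apply, Finset.sum_apply, Pi.smul_apply, smul_eq_mul,
          Finset.mul_sum, transpose_apply]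
        exact Finset.sum_congr rfl fun _ _ => by ring
      simp only [this]
      exact Submodule.sum_mem _ fun t _ => Submodule.smul_mem _ _ (Submodule.subset_span ⟨t, rfl⟩)
    · rintro _ ⟨t, rfl⟩
      generalize (√(T:ℝ))⁻¹ • (Bᵀ * V) = L at hB ⊢
      have : (fun i => B t i) = ∑ j, ((√(T:ℝ) • V) t j) • (fun i => L i j) := by
        ext i
        have := congrFun (congrFun hB t) i
        rw [this]
        simp [Matrix.mul_apply, Finset.sum_apply]
      simp only [this]
      exact Submodule.sum_mem _ fun t _ => Submodule.smul_mem _ _ (Submodule.subset_span ⟨t, rfl⟩)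
end

section
/- Let p ≥ 2 and 1 ≤ r ≤ p−1, and let σ_1 ≥ σ_2 ≥ … ≥ σ_p ≥ 0 with σ_r > 0 and σ_j = 0 for all j > r. Let σ̂_1, …, σ̂_p ≥ 0 and ε ≥ 0 satisfy |σ̂_j − σ_j| ≤ ε for all j, and let c > 0 with ε < σ_r. Assume (ε+c)² < c·(σ_r − ε + c) and, for every 1 ≤ j ≤ r−1, (ε+c)·(σ_j + ε + c) < (σ_{j+1} − ε + c)·(σ_r − ε + c). Then r is the unique minimizer over j ∈ {1, …, p−1} of the ridge-type ratio (σ̂_{j+1} + c)/(σ̂_j + c); that is, (σ̂_{r+1} + c)/(σ̂_r + c) < (σ̂_{j+1} + c)/(σ̂_j + c) for every j ∈ {1, …, p−1} with j ≠ r. -/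
/-- **Consistency of the ridge-type ratio rank estimator.** Let
`σ_1 ≥ … ≥ σ_p ≥ 0` with `σ_r > 0` and `σ_j = 0` for `j > r`
(`1 ≤ r ≤ p−1`, `p ≥ 2`), and let `σ̂_j ≥ 0` satisfy `|σ̂_j − σ_j| ≤ ε` on
`1 ≤ j ≤ p`. If `c > 0`, `ε < σ_r`, `(ε+c)² < c·(σ_r − ε + c)`, and
`(ε+c)·(σ_j + ε + c) < (σ_{j+1} − ε + c)·(σ_r − ε + c)` for all
`1 ≤ j ≤ r−1`, then `r` is the unique minimizer of
`j ↦ (σ̂_{j+1} + c)/(σ̂_j + c)` over `j ∈ {1, …, p−1}`. -/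
theorem ridge_ratio_rank_selection (p r : ℕ) (hp : 2 ≤ p) (hr1 : 1 ≤ r)
    (hrp : r ≤ p - 1) (σ σh : ℕ → ℝ) (ε c : ℝ)
    (hmono : ∀ j, 1 ≤ j → j < p → σ (j + 1) ≤ σ j)
    (hσnn : ∀ j, 1 ≤ j → j ≤ p → 0 ≤ σ j)
    (hσr : 0 < σ r)
    (hzero : ∀ j, r < j → j ≤ p → σ j = 0)
    (hσhnn : ∀ j, 1 ≤ j → j ≤ p → 0 ≤ σh j)
    (hε : 0 ≤ ε)
    (happrox : ∀ j, 1 ≤ j → j ≤ p → |σh j - σ j| ≤ ε)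
    (hc : 0 < c) (hεσ : ε < σ r)
    (hgap0 : (ε + c) ^ 2 < c * (σ r - ε + c))
    (hgap : ∀ j, 1 ≤ j → j ≤ r - 1 →
      (ε + c) * (σ j + ε + c) < (σ (j + 1) - ε + c) * (σ r - ε + c)) :
    ∀ j, 1 ≤ j → j ≤ p - 1 → j ≠ r →
      (σh (r + 1) + c) / (σh r + c) < (σh (j + 1) + c) / (σh j + c) := by
  intro j hj1 hjp hjr
  have a1 := abs_le.mp (happrox (r + 1) (by omega) (by omega))
  have z1 := hzero (r + 1) (by omega) (by omega)
  have a2 := abs_le.mp (happrox r (by omega) (by omega))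
  have a3 := abs_le.mp (happrox j (by omega) (by omega))
  have a4 := abs_le.mp (happrox (j + 1) (by omega) (by omega))
  have n2 := hσhnn r (by omega) (by omega)
  have n3 := hσhnn j (by omega) (by omega)
  have n4 := hσhnn (j + 1) (by omega) (by omega)
  rw [div_lt_div_iff₀ (by linarith) (by linarith)]
  rcases lt_or_gt_of_ne hjr with h | h
  · have g := hgap j hj1 (by omega)
    have l : (σh (r + 1) + c) * (σh j + c) ≤ (ε + c) * (σ j + ε + c) :=
      mul_le_mul (by linarith) (by linarith) (by linarith) (by linarith)
    have u : (σ (j + 1) - ε + c) * (σ r - ε + c) ≤ (σh (j + 1) + c) * (σh r + c) :=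
      mul_le_mul (by linarith) (by linarith) (by linarith) (by linarith)
    linarith
  · have z3 := hzero j h (by omega)
    have l : (σh (r + 1) + c) * (σh j + c) ≤ (ε + c) * (ε + c) :=
      mul_le_mul (by linarith) (by linarith) (by linarith) (by linarith)
    have u : c * (σ r - ε + c) ≤ (σh (j + 1) + c) * (σh r + c) :=
      mul_le_mul (by linarith) (by linarith) (by linarith) (by linarith)
    nlinarith
end
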